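/- Let f : S^{d-1} → ℂ^p be α-Hölder continuous with α ∈ [0,1], let Θ^{d-1}_{n_a} be the uniform angular grid obtained by discretizing [0,π]^{d-2} × [0,2π) with n_a points per axis (shifted by half a step in the polar angles), and let ω(θ) = Π_{i=1}^{d-2} (sin θ_i)^{d-1-i} be the spherical quadrature weight. Then there exists a constant C > 0 depending only on f and d such that for every rotation R ∈ SO(d), (1/n_a^{d-1}) ‖Σ_{θ∈Θ^{d-1}_{n_a}} f(s(θ)) ω(θ) − Σ_{θ∈Θ^{d-1}_{n_a}} f(R s(θ)) ω(θ)‖₂ ≤ C d^{α/2} n_a^{−α}. -/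

import Mathlib

/-!
Both weighted sums are Riemann sums for the same integral, so each is compared with it.

* **Spherical coordinates** (`lintegral_spherical`). On `ℝ^(m+2)` Lebesgue measure is
  `r^(m+1) ω(θ) dr dθ`, by induction on the dimension through planar polar coordinates.
* **Rotation invariance** (`map_sphMeasure`, `integral_rotation`). Let `ν` be the image of
  `ω(θ) dθ` under `θ ↦ s(θ)`. By the spherical coordinates formula, `ν A` is a fixed multiple of
  the volume of the cone `{x | ‖x‖ < 1, x / ‖x‖ ∈ A}`, and linear isometries preserve that volume.
  Hence `∫ ω(θ) f(R s(θ)) dθ` does not depend on the rotation `R`.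
* **Quadrature error** (`riemann_sum_error`, `sphere_quadrature`). On the closed angular box `ω`
  and `s` are Lipschitz, so `ω · (f ∘ R ∘ s)` oscillates by at most `C n^(-α)` on a grid cell, with
  `C` independent of `R`. The normalized sum is therefore within `C n^(-α)` of the normalized
  integral.

The triangle inequality gives the bound `2 C n^(-α)`, and `d^(α/2) ≥ 1`. The integral is used only
for `α > 0`, where `f` is continuous on the sphere; for `α = 0` boundedness of `f` is enough.
In dimensions `0` and `1` the group `SO(d)` is trivial.
-/

open MeasureTheory

/-- Action of a `d × d` real matrix on Euclidean space by matrix-vector multiplication. -/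
noncomputable def rotate (d : ℕ) (R : Matrix (Fin d) (Fin d) ℝ)
    (x : EuclideanSpace ℝ (Fin d)) : EuclideanSpace ℝ (Fin d) :=
  (EuclideanSpace.equiv (Fin d) ℝ).symm (R.mulVec (EuclideanSpace.equiv (Fin d) ℝ x))

/-- The standard angular parameterization `s(θ)` of the sphere `S^{d-1}`. -/
noncomputable def sphParam (d : ℕ) (θ : Fin (d - 1) → ℝ) : EuclideanSpace ℝ (Fin d) :=
  (EuclideanSpace.equiv (Fin d) ℝ).symm fun i =>
    if h : (i : ℕ) < d - 1 then
      (∏ j : Fin (d - 1), if (j : ℕ) < (i : ℕ) then Real.sin (θ j) else 1) *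
        Real.cos (θ ⟨i, h⟩)
    else ∏ j : Fin (d - 1), Real.sin (θ j)

/-- The spherical quadrature weight `ω(θ) = Π (sin θ_i)^{d-1-i}`. -/
noncomputable def sphWeight (d : ℕ) (θ : Fin (d - 1) → ℝ) : ℝ :=
  ∏ j : Fin (d - 1), Real.sin (θ j) ^ (d - 2 - (j : ℕ))

/-- The uniform angular grid point indexed by `a`, with the polar angles shifted
by half a step and the azimuthal angle unshifted. -/
noncomputable def gridPt (d n : ℕ) (a : Fin (d - 1) → Fin n) : Fin (d - 1) → ℝ := fun j =>
  if (j : ℕ) < d - 2 then Real.pi / n * ((a j : ℕ) + 1 / 2)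
  else 2 * Real.pi / n * ((a j : ℕ) : ℝ)

open scoped ENNReal

/-! ### Polar and spherical coordinates -/

lemma lintegral_pi_succ {n : ℕ} (μ : Fin (n + 1) → Measure ℝ) [∀ i, SigmaFinite (μ i)]
    (F : (Fin (n + 1) → ℝ) → ℝ≥0∞) (hF : Measurable F) :
    ∫⁻ x, F x ∂(Measure.pi μ) =
      ∫⁻ x, ∫⁻ y, F (Fin.cons x y) ∂(Measure.pi fun i : Fin n => μ i.succ) ∂(μ 0) := by
  have h := (measurePreserving_piFinSuccAbove μ 0).symm
  rw [← h.lintegral_comp hF, lintegral_prod _ (by fun_prop)]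
  simp only [MeasurableEquiv.piFinSuccAbove_symm_apply, Fin.insertNthEquiv_zero,
    Fin.succAbove_zero]
  rfl

lemma lintegral_plane_polar (G : ℝ → ℝ → ℝ≥0∞) (hG : Measurable (Function.uncurry G)) :
    ∫⁻ x, ∫⁻ y, G x y = ∫⁻ φ in Set.Ioo (-Real.pi) Real.pi, ∫⁻ ρ in Set.Ioi (0 : ℝ),
      ENNReal.ofReal ρ * G (ρ * Real.cos φ) (ρ * Real.sin φ) := by
  have h1 : ∫⁻ x, ∫⁻ y, G x y = ∫⁻ p : ℝ × ℝ, Function.uncurry G p :=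
    (lintegral_prod _ hG.aemeasurable).symm
  rw [h1, ← lintegral_comp_polarCoord_symm, polarCoord_target, Measure.volume_eq_prod,
    ← Measure.prod_restrict, lintegral_prod_symm _ ?_]
  · simp [polarCoord_symm_apply, Function.uncurry]
  · apply Measurable.aemeasurable
    simp only [polarCoord_symm_apply, smul_eq_mul]
    refine Measurable.mul (by fun_prop) (hG.comp (by fun_prop))

lemma lintegral_halfplane_polar (G : ℝ → ℝ → ℝ≥0∞) (hG : Measurable (Function.uncurry G)) :
    ∫⁻ x, ∫⁻ y in Set.Ioi (0 : ℝ), G x y =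
      ∫⁻ φ in Set.Ico 0 Real.pi, ∫⁻ ρ in Set.Ioi (0 : ℝ),
      ENNReal.ofReal ρ * G (ρ * Real.cos φ) (ρ * Real.sin φ) := by
  have h1 : ∀ x, ∫⁻ y in Set.Ioi (0 : ℝ), G x y = ∫⁻ y, (Set.Ioi (0 : ℝ)).indicator (G x) y :=
    fun x => (lintegral_indicator measurableSet_Ioi _).symm
  simp only [h1]
  rw [lintegral_plane_polar]
  swap
  · have : Function.uncurry (fun x y => (Set.Ioi (0 : ℝ)).indicator (G x) y) =
        (Prod.snd ⁻¹' (Set.Ioi (0 : ℝ))).indicator (Function.uncurry G) := by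
      ext ⟨x, y⟩; simp [Set.indicator, Function.uncurry]
    rw [this]
    exact hG.indicator (measurable_snd measurableSet_Ioi)
  have h2 : ∀ φ ∈ Set.Ioo (-Real.pi) Real.pi, (∫⁻ ρ in Set.Ioi (0 : ℝ), ENNReal.ofReal ρ *
      (Set.Ioi (0 : ℝ)).indicator (G (ρ * Real.cos φ)) (ρ * Real.sin φ)) =
      (Set.Ioo 0 Real.pi).indicator (fun φ => ∫⁻ ρ in Set.Ioi (0 : ℝ),
        ENNReal.ofReal ρ * G (ρ * Real.cos φ) (ρ * Real.sin φ)) φ := by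
    intro φ hφ
    by_cases h : 0 < φ
    · rw [Set.indicator_of_mem (show φ ∈ Set.Ioo 0 Real.pi from ⟨h, hφ.2⟩)]
      refine setLIntegral_congr_fun measurableSet_Ioi fun ρ hρ => ?_
      have : 0 < ρ * Real.sin φ := mul_pos hρ (Real.sin_pos_of_pos_of_lt_pi h hφ.2)
      rw [Set.indicator_of_mem (show ρ * Real.sin φ ∈ Set.Ioi (0:ℝ) from this)]
    · rw [Set.indicator_of_notMem (fun h' => h h'.1)]
      rw [← lintegral_zero (μ := volume.restrict (Set.Ioi (0:ℝ)))]
      refine setLIntegral_congr_fun measurableSet_Ioi fun ρ hρ => ?_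
      have : ρ * Real.sin φ ≤ 0 := mul_nonpos_of_nonneg_of_nonpos (le_of_lt hρ)
        (Real.sin_nonpos_of_nonpos_of_neg_pi_le (not_lt.1 h) hφ.1.le)
      simp [this]
  rw [setLIntegral_congr_fun measurableSet_Ioo h2, setLIntegral_indicator measurableSet_Ioo,
    Set.inter_eq_left.2 (Set.Ioo_subset_Ioo_left (by linarith [Real.pi_pos]))]
  exact setLIntegral_congr Ioo_ae_eq_Ico

/-- Polar coordinates with the angle in `[0, 2π)`; the substitution `x ↦ -x` moves Mathlib's
range `(-π, π)` there. -/
lemma lintegral_plane_polar' (G : ℝ → ℝ → ℝ≥0∞) (hG : Measurable (Function.uncurry G)) :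
    ∫⁻ x, ∫⁻ y, G x y = ∫⁻ φ in Set.Ico 0 (2 * Real.pi), ∫⁻ ρ in Set.Ioi (0 : ℝ),
      ENNReal.ofReal ρ * G (ρ * Real.cos φ) (ρ * Real.sin φ) := by
  have h0 : ∫⁻ x, ∫⁻ y, G x y = ∫⁻ x, ∫⁻ y, G (-x) (-y) := by
    rw [← lintegral_neg_eq_self]
    congr 1; ext x
    rw [← lintegral_neg_eq_self]
  rw [h0, lintegral_plane_polar (fun x y => G (-x) (-y)) (hG.comp (by fun_prop :
    Measurable (fun p : ℝ × ℝ => (-p.1, -p.2))))]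
  rw [← lintegral_indicator measurableSet_Ioo,
    ← lintegral_sub_right_eq_self _ Real.pi,
    setLIntegral_congr (Ioo_ae_eq_Ico (a := (0:ℝ)) (b := 2 * Real.pi)).symm,
    ← lintegral_indicator measurableSet_Ioo]
  congr 1; ext φ
  have hiff : φ - Real.pi ∈ Set.Ioo (-Real.pi) Real.pi ↔ φ ∈ Set.Ioo 0 (2 * Real.pi) := by
    simp only [Set.mem_Ioo]
    constructor <;> rintro ⟨a, b⟩ <;> constructor <;> linarith
  simp only [Set.indicator, hiff, Real.cos_sub_pi, Real.sin_sub_pi, mul_neg, neg_neg]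

lemma sphParam_succ (m : ℕ) (x : ℝ) (y : Fin (m + 1) → ℝ) :
    (sphParam (m + 3) (Fin.cons x y : Fin (m + 2) → ℝ)).ofLp =
      Fin.cons (Real.cos x) (Real.sin x • (sphParam (m + 2) y).ofLp) := by
  ext i
  simp only [sphParam, EuclideanSpace.equiv, PiLp.coe_symm_continuousLinearEquiv]
  refine Fin.cases ?_ (fun i => ?_) i
  · simp
  · simp only [Fin.val_succ, Fin.cons_succ, Pi.smul_apply, smul_eq_mul]
    by_cases h : (i : ℕ) < m + 1
    · rw [dif_pos (by omega), dif_pos (by omega)]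
      change (∏ j : Fin (m + 2), if (j : ℕ) < (i : ℕ) + 1 then
        Real.sin ((Fin.cons x y : Fin (m + 2) → ℝ) j) else 1) * _ = Real.sin x *
        ((∏ j : Fin (m + 1), if (j : ℕ) < (i : ℕ) then Real.sin (y j) else 1) * _)
      rw [Fin.prod_univ_succ (n := m + 1)]
      have : (⟨(i:ℕ) + 1, by omega⟩ : Fin (m + 2)) = Fin.succ ⟨i, h⟩ := rfl
      rw [this, Fin.cons_succ]
      simp [mul_assoc]
    · rw [dif_neg (by omega), dif_neg (by omega)]
      change ∏ j : Fin (m + 2), Real.sin ((Fin.cons x y : Fin (m + 2) → ℝ) j) =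
        Real.sin x * ∏ j : Fin (m + 1), Real.sin (y j)
      simp [Fin.prod_univ_succ (n := m + 1)]

lemma sphWeight_succ (m : ℕ) (x : ℝ) (y : Fin (m + 1) → ℝ) :
    sphWeight (m + 3) (Fin.cons x y : Fin (m + 2) → ℝ) =
      Real.sin x ^ (m + 1) * sphWeight (m + 2) y := by
  simp only [sphWeight]
  change ∏ j : Fin (m + 2), Real.sin ((Fin.cons x y : Fin (m + 2) → ℝ) j) ^
      (m + 3 - 2 - (j : ℕ)) =
    Real.sin x ^ (m + 1) * ∏ j : Fin (m + 1), Real.sin (y j) ^ (m + 2 - 2 - (j : ℕ))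
  rw [Fin.prod_univ_succ (n := m + 1)]
  simp

/-- Side lengths of the angular box `[0, π)^m × [0, 2π)`. -/
noncomputable def side (m : ℕ) (j : Fin (m + 1)) : ℝ :=
  if (j : ℕ) < m then Real.pi else 2 * Real.pi

lemma measurable_sphParam (d : ℕ) : Measurable fun θ => (sphParam d θ).ofLp := by
  refine measurable_pi_lambda _ fun i => ?_
  simp only [sphParam, EuclideanSpace.equiv, PiLp.coe_symm_continuousLinearEquiv]
  split_ifs
  · refine Measurable.mul (Finset.measurable_prod _ fun j _ => ?_) (by fun_prop)
    split_ifs <;> fun_prop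
  · fun_prop

lemma measurable_sphWeight (d : ℕ) : Measurable (sphWeight d) := by
  unfold sphWeight; fun_prop

lemma side_succ_zero (m : ℕ) : side (m + 1) 0 = Real.pi := by simp [side]

lemma side_succ_succ (m : ℕ) (j : Fin (m + 1)) : side (m + 1) j.succ = side m j := by
  simp [side]

/-- Lebesgue measure on the angular box `[0, π)^m × [0, 2π)`. -/
noncomputable def boxMeasure (m : ℕ) : Measure (Fin (m + 1) → ℝ) :=
  Measure.pi fun j => volume.restrict (Set.Ico 0 (side m j))

instance (m : ℕ) : SFinite (boxMeasure m) := by unfold boxMeasure; infer_instance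

lemma cons_smul_aux {n : ℕ} (a b c : ℝ) (v : Fin n → ℝ) :
    (Fin.cons (a * b) ((a * c) • v) : Fin (n + 1) → ℝ) = a • Fin.cons b (c • v) := by
  ext i
  refine Fin.cases ?_ (fun i => ?_) i <;> simp [mul_assoc]

/-- Integration in spherical coordinates on `ℝ^(m+2)`, by induction on the dimension. Write
`x = (x₀, y)` and use spherical coordinates `y = r u` for `y`; planar polar coordinates
`(x₀, r) = (ρ cos φ, ρ sin φ)` on the half-plane `r > 0` then produce the new polar angle `φ`, and
`r^(m+1) dx₀ dr = ρ^(m+2) (sin φ)^(m+1) dρ dφ` accounts for the new factor of the weight. -/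
theorem lintegral_spherical (m : ℕ) (F : (Fin (m + 2) → ℝ) → ℝ≥0∞) (hF : Measurable F) :
    ∫⁻ x, F x = ∫⁻ θ, ENNReal.ofReal (sphWeight (m + 2) θ) *
      (∫⁻ r in Set.Ioi (0 : ℝ), ENNReal.ofReal (r ^ (m + 1)) *
        F (r • (sphParam (m + 2) θ).ofLp)) ∂(boxMeasure m) := by
  induction m with
  | zero =>
    have e1 : ∀ x : ℝ, (fun y : ℝ => Fin.cons x (fun _ : Fin 1 => y) : ℝ → Fin 2 → ℝ) =
        fun y => ![x, y] := by
      intro x; ext y i; fin_cases i <;> rfl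
    have e2 : ∀ G : (Fin 1 → ℝ) → ℝ≥0∞, Measurable G → ∀ μ : Fin 1 → Measure ℝ,
        (∀ i, SigmaFinite (μ i)) →
        ∫⁻ y, G y ∂(Measure.pi μ) = ∫⁻ y, G (fun _ => y) ∂(μ 0) := by
      intro G hG μ hμ
      rw [lintegral_pi_succ μ G hG]
      congr 1; ext x
      rw [Measure.pi_of_empty, lintegral_dirac]
      congr 1; ext i; fin_cases i; rfl
    have h1 : ∫⁻ x, F x = ∫⁻ x, ∫⁻ y, F ![x, y] := by
      rw [volume_pi, lintegral_pi_succ _ F hF]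
      congr 1; ext x
      rw [e2 _ (by fun_prop) _ (fun _ => inferInstance)]
      congr 1; ext y
      exact congrArg F (congrFun (e1 x) y)
    rw [h1, lintegral_plane_polar' _ (by
      refine hF.comp (measurable_pi_lambda _ fun i => ?_)
      fin_cases i
      · exact measurable_fst
      · exact measurable_snd)]
    rw [boxMeasure, e2 _ ?_ _ (fun _ => inferInstance)]
    · have : side 0 0 = 2 * Real.pi := by simp [side]
      rw [this]
      congr 1; ext φ
      have hw : sphWeight (0 + 2) (fun _ => φ) = 1 := by simp [sphWeight]
      rw [hw, ENNReal.ofReal_one, one_mul]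
      congr 1; ext ρ
      rw [zero_add, pow_one]
      congr 2
      ext i
      fin_cases i
      · simp [sphParam, EuclideanSpace.equiv]
      · simp [sphParam, EuclideanSpace.equiv]
    · refine ((measurable_sphWeight (0 + 2)).ennreal_ofReal).mul ?_
      refine Measurable.lintegral_prod_right' (f := fun p : (Fin 1 → ℝ) × ℝ =>
        ENNReal.ofReal (p.2 ^ (0 + 1)) * F (p.2 • (sphParam (0 + 2) p.1).ofLp)) ?_
      refine Measurable.mul (by fun_prop) (hF.comp ?_)
      exact measurable_snd.smul ((measurable_sphParam (0 + 2)).comp measurable_fst)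
  | succ m ih =>
    have hu := measurable_sphParam (m + 2)
    have hw := measurable_sphWeight (m + 2)
    have hcons : Measurable fun p : ℝ × (Fin (m + 2) → ℝ) =>
        (Fin.cons p.1 p.2 : Fin (m + 3) → ℝ) := by
      refine measurable_pi_lambda _ fun i => ?_
      refine Fin.cases ?_ (fun i => ?_) i
      · exact measurable_fst
      · simp only [Fin.cons_succ]; fun_prop
    have hG : Measurable fun q : (ℝ × (Fin (m + 1) → ℝ)) × ℝ =>
        ENNReal.ofReal (q.2 ^ (m + 1)) *
          F (Fin.cons q.1.1 (q.2 • (sphParam (m + 2) q.1.2).ofLp)) := by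
      refine Measurable.mul (by fun_prop) (hF.comp (hcons.comp (Measurable.prodMk (by fun_prop) ?_)))
      exact measurable_snd.smul (hu.comp (by fun_prop))
    have h1 : ∫⁻ x, F x = ∫⁻ x : ℝ, ∫⁻ θ, ENNReal.ofReal (sphWeight (m + 2) θ) *
        (∫⁻ r in Set.Ioi (0 : ℝ), ENNReal.ofReal (r ^ (m + 1)) *
          F (Fin.cons x (r • (sphParam (m + 2) θ).ofLp))) ∂(boxMeasure m) := by
      rw [volume_pi, lintegral_pi_succ _ F hF]
      congr 1; ext x
      rw [← volume_pi, ih (fun y => F (Fin.cons x y)) (hF.comp (hcons.comp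
        (by fun_prop : Measurable fun y : Fin (m + 2) → ℝ => (x, y))))]
    have h2 : ∫⁻ x : ℝ, ∫⁻ θ, ENNReal.ofReal (sphWeight (m + 2) θ) *
        (∫⁻ r in Set.Ioi (0 : ℝ), ENNReal.ofReal (r ^ (m + 1)) *
          F (Fin.cons x (r • (sphParam (m + 2) θ).ofLp))) ∂(boxMeasure m) =
        ∫⁻ θ, ENNReal.ofReal (sphWeight (m + 2) θ) * (∫⁻ x : ℝ,
        ∫⁻ r in Set.Ioi (0 : ℝ), ENNReal.ofReal (r ^ (m + 1)) *
          F (Fin.cons x (r • (sphParam (m + 2) θ).ofLp))) ∂(boxMeasure m) := by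
      have hI : Measurable fun p : ℝ × (Fin (m + 1) → ℝ) =>
          ∫⁻ r in Set.Ioi (0 : ℝ), ENNReal.ofReal (r ^ (m + 1)) *
          F (Fin.cons p.1 (r • (sphParam (m + 2) p.2).ofLp)) := hG.lintegral_prod_right'
      rw [lintegral_lintegral_swap]
      · congr 1; ext θ
        rw [lintegral_const_mul]
        exact hI.comp (by fun_prop : Measurable fun x : ℝ => (x, θ))
      · exact ((hw.comp measurable_snd).ennreal_ofReal.mul hI).aemeasurable
    have h3 : ∀ θ : Fin (m + 1) → ℝ, ∫⁻ x : ℝ,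
        ∫⁻ r in Set.Ioi (0 : ℝ), ENNReal.ofReal (r ^ (m + 1)) *
          F (Fin.cons x (r • (sphParam (m + 2) θ).ofLp)) =
        ∫⁻ φ in Set.Ico 0 Real.pi, ENNReal.ofReal (Real.sin φ ^ (m + 1)) *
          ∫⁻ r in Set.Ioi (0 : ℝ), ENNReal.ofReal (r ^ (m + 2)) *
          F (r • Fin.cons (Real.cos φ) (Real.sin φ • (sphParam (m + 2) θ).ofLp)) := by
      intro θ
      rw [lintegral_halfplane_polar (fun x r => ENNReal.ofReal (r ^ (m + 1)) *
          F (Fin.cons x (r • (sphParam (m + 2) θ).ofLp)))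
        (hG.comp (by fun_prop : Measurable fun p : ℝ × ℝ => ((p.1, θ), p.2)))]
      refine setLIntegral_congr_fun measurableSet_Ico fun φ hφ => ?_
      have hs : 0 ≤ Real.sin φ := Real.sin_nonneg_of_nonneg_of_le_pi hφ.1 hφ.2.le
      rw [← lintegral_const_mul' _ _ ENNReal.ofReal_ne_top]
      refine setLIntegral_congr_fun measurableSet_Ioi fun ρ hρ => ?_
      have hρ' : 0 ≤ ρ := le_of_lt hρ
      rw [cons_smul_aux, ← mul_assoc, ← mul_assoc, ← ENNReal.ofReal_mul hρ',
        ← ENNReal.ofReal_mul (by positivity)]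
      congr 2
      ring
    rw [h1, h2]
    simp only [h3]
    have hK : Measurable fun p : ((Fin (m + 1) → ℝ) × ℝ) × ℝ =>
        ENNReal.ofReal (p.2 ^ (m + 2)) *
          F (p.2 • Fin.cons (Real.cos p.1.2) (Real.sin p.1.2 • (sphParam (m + 2) p.1.1).ofLp)) := by
      have hv : Measurable fun p : ((Fin (m + 1) → ℝ) × ℝ) × ℝ =>
          Real.sin p.1.2 • (sphParam (m + 2) p.1.1).ofLp :=
        (by fun_prop : Measurable fun p : ((Fin (m + 1) → ℝ) × ℝ) × ℝ => Real.sin p.1.2).smul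
          (hu.comp (measurable_fst.comp measurable_fst))
      have hc : Measurable fun p : ((Fin (m + 1) → ℝ) × ℝ) × ℝ => Real.cos p.1.2 := by fun_prop
      exact Measurable.mul (by fun_prop) (hF.comp (measurable_snd.smul
        (hcons.comp (hc.prodMk hv))))
    have hK' : Measurable fun p : (Fin (m + 1) → ℝ) × ℝ =>
        ENNReal.ofReal (Real.sin p.2 ^ (m + 1)) * ∫⁻ r in Set.Ioi (0 : ℝ),
        ENNReal.ofReal (r ^ (m + 2)) *
          F (r • Fin.cons (Real.cos p.2) (Real.sin p.2 • (sphParam (m + 2) p.1).ofLp)) :=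
      Measurable.mul (by fun_prop) hK.lintegral_prod_right'
    have h4 : ∀ θ : Fin (m + 1) → ℝ, ENNReal.ofReal (sphWeight (m + 2) θ) *
        (∫⁻ φ in Set.Ico 0 Real.pi, ENNReal.ofReal (Real.sin φ ^ (m + 1)) *
          ∫⁻ r in Set.Ioi (0 : ℝ), ENNReal.ofReal (r ^ (m + 2)) *
          F (r • Fin.cons (Real.cos φ) (Real.sin φ • (sphParam (m + 2) θ).ofLp))) =
        ∫⁻ φ in Set.Ico 0 Real.pi, ENNReal.ofReal (sphWeight (m + 2) θ) *
          (ENNReal.ofReal (Real.sin φ ^ (m + 1)) *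
          ∫⁻ r in Set.Ioi (0 : ℝ), ENNReal.ofReal (r ^ (m + 2)) *
          F (r • Fin.cons (Real.cos φ) (Real.sin φ • (sphParam (m + 2) θ).ofLp))) := fun θ =>
      (lintegral_const_mul' _ _ ENNReal.ofReal_ne_top).symm
    simp only [h4]
    rw [lintegral_lintegral_swap
      ((hw.comp measurable_fst).ennreal_ofReal.mul hK').aemeasurable]
    rw [boxMeasure.eq_def (m + 1), lintegral_pi_succ]
    · simp only [side_succ_zero, side_succ_succ]
      refine setLIntegral_congr_fun measurableSet_Ico fun φ hφ => ?_
      have hs : 0 ≤ Real.sin φ := Real.sin_nonneg_of_nonneg_of_le_pi hφ.1 hφ.2.le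
      rw [← boxMeasure.eq_def m]
      congr 1; ext θ
      rw [sphWeight_succ, sphParam_succ, ENNReal.ofReal_mul (by positivity), ← mul_assoc,
        mul_comm (ENNReal.ofReal (sphWeight (m + 2) θ))]
    · refine ((measurable_sphWeight (m + 3)).ennreal_ofReal).mul ?_
      refine Measurable.lintegral_prod_right' (f := fun p : (Fin (m + 2) → ℝ) × ℝ =>
        ENNReal.ofReal (p.2 ^ (m + 2)) * F (p.2 • (sphParam (m + 3) p.1).ofLp)) ?_
      refine Measurable.mul (by fun_prop) (hF.comp ?_)
      exact measurable_snd.smul ((measurable_sphParam (m + 3)).comp measurable_fst)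

/-! ### Rotation invariance -/

lemma norm_sphParam (m : ℕ) (θ : Fin (m + 1) → ℝ) : ‖sphParam (m + 2) θ‖ = 1 := by
  have key : ∑ i, (sphParam (m + 2) θ).ofLp i ^ 2 = 1 := by
    induction m with
    | zero => simp [sphParam, EuclideanSpace.equiv, Fin.sum_univ_succ]
    | succ m ih =>
      have h := sphParam_succ m (θ 0) (Fin.tail θ)
      have hc : (Fin.cons (θ 0) (Fin.tail θ) : Fin (m + 2) → ℝ) = θ := Fin.cons_self_tail θ
      rw [hc] at h
      rw [h, Fin.sum_univ_succ]
      simp only [Fin.cons_zero, Fin.cons_succ, Pi.smul_apply, smul_eq_mul, mul_pow,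
        ← Finset.mul_sum, ih, mul_one]
      exact Real.cos_sq_add_sin_sq (θ 0)
  rw [EuclideanSpace.norm_eq]
  simp only [Real.norm_eq_abs, sq_abs, key, Real.sqrt_one]

lemma measurable_sphParam' (d : ℕ) : Measurable (sphParam d) :=
  (WithLp.measurable_toLp 2 _).comp (measurable_sphParam d)

/-- The pushforward to the sphere of `ω(θ) dθ` under the angular parameterization; up to
normalization this is the surface measure. -/
noncomputable def sphMeasure (m : ℕ) : Measure (EuclideanSpace ℝ (Fin (m + 2))) :=
  ((boxMeasure m).withDensity fun θ => ENNReal.ofReal (sphWeight (m + 2) θ)).map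
    (sphParam (m + 2))

/-- The measure of `A` under `sphMeasure` is, up to a constant factor, the volume of the cone
over `A` in the unit ball. -/
lemma volume_cone (m : ℕ) : ∃ c : ℝ≥0∞, ∀ A : Set (EuclideanSpace ℝ (Fin (m + 2))),
    MeasurableSet A → volume {x : EuclideanSpace ℝ (Fin (m + 2)) | ‖x‖ < 1 ∧ ‖x‖⁻¹ • x ∈ A} =
      sphMeasure m A * c := by
  refine ⟨∫⁻ r in Set.Ioi (0 : ℝ), ENNReal.ofReal (r ^ (m + 1)) *
    (Set.Iio (1 : ℝ)).indicator 1 r, fun A hA => ?_⟩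
  set T := {x : EuclideanSpace ℝ (Fin (m + 2)) | ‖x‖ < 1 ∧ ‖x‖⁻¹ • x ∈ A} with hT
  have hTm : MeasurableSet T := by
    refine MeasurableSet.inter (measurableSet_lt measurable_norm measurable_const) ?_
    exact (by fun_prop : Measurable fun x : EuclideanSpace ℝ (Fin (m + 2)) => ‖x‖⁻¹ • x) hA
  have hF : Measurable (fun x : Fin (m + 2) → ℝ => T.indicator (1 : EuclideanSpace ℝ (Fin (m + 2)) → ℝ≥0∞) (WithLp.toLp 2 x)) :=
    (measurable_one.indicator hTm).comp (WithLp.measurable_toLp 2 _)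
  have h1 : volume T = ∫⁻ x : Fin (m + 2) → ℝ, T.indicator 1 (WithLp.toLp 2 x) := by
    rw [(PiLp.volume_preserving_toLp (Fin (m + 2))).lintegral_comp
      (measurable_one.indicator hTm), lintegral_indicator_one hTm]
  have h2 : ∀ θ, ∫⁻ r in Set.Ioi (0 : ℝ), ENNReal.ofReal (r ^ (m + 1)) *
      T.indicator 1 (WithLp.toLp 2 (r • (sphParam (m + 2) θ).ofLp)) =
      (sphParam (m + 2) ⁻¹' A).indicator 1 θ * ∫⁻ r in Set.Ioi (0 : ℝ),
        ENNReal.ofReal (r ^ (m + 1)) * (Set.Iio (1 : ℝ)).indicator 1 r := by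
    intro θ
    rw [← lintegral_const_mul']
    · refine setLIntegral_congr_fun measurableSet_Ioi fun r hr => ?_
      have hr0 : 0 < r := hr
      have e : WithLp.toLp 2 (r • (sphParam (m + 2) θ).ofLp) = r • sphParam (m + 2) θ := rfl
      have hn : ‖r • sphParam (m + 2) θ‖ = r := by
        rw [norm_smul, norm_sphParam, mul_one, Real.norm_of_nonneg hr0.le]
      have hmem : r • sphParam (m + 2) θ ∈ T ↔ r < 1 ∧ sphParam (m + 2) θ ∈ A := by
        rw [hT, Set.mem_ofPred_eq, hn, smul_smul, inv_mul_cancel₀ hr0.ne', one_smul]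
      simp only [e]
      by_cases ha : r < 1 <;> by_cases hb : sphParam (m + 2) θ ∈ A <;>
        simp only [Set.indicator, hmem, Set.mem_preimage, Set.mem_Iio, ha, hb] <;> simp
    · by_cases h : θ ∈ sphParam (m + 2) ⁻¹' A <;> simp [h]
  rw [h1, lintegral_spherical m _ hF]
  simp only [h2, ← mul_assoc]
  have hpre := measurable_sphParam' (m + 2) hA
  have hwm := (measurable_sphWeight (m + 2)).ennreal_ofReal
  refine (lintegral_mul_const (μ := boxMeasure m) _
    (hwm.mul (measurable_one.indicator hpre))).trans ?_
  congr 1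
  rw [sphMeasure, Measure.map_apply (measurable_sphParam' (m + 2)) hA,
    withDensity_apply _ hpre, ← lintegral_indicator hpre]
  congr 1; ext θ
  by_cases h : θ ∈ sphParam (m + 2) ⁻¹' A <;> simp [h]

/-- `sphMeasure` is invariant under linear isometries, since the volume of cones is. -/
lemma map_sphMeasure (m : ℕ) (L : EuclideanSpace ℝ (Fin (m + 2)) ≃ₗᵢ[ℝ]
    EuclideanSpace ℝ (Fin (m + 2))) : MeasurePreserving L (sphMeasure m) (sphMeasure m) := by
  obtain ⟨c, hc⟩ := volume_cone m
  have hball : volume (Metric.ball (0 : EuclideanSpace ℝ (Fin (m + 2))) 1) =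
      sphMeasure m Set.univ * c := by
    rw [← hc _ MeasurableSet.univ]
    congr 1; ext x; simp
  have hpos := Metric.measure_ball_pos volume (0 : EuclideanSpace ℝ (Fin (m + 2))) one_pos
  have hfin := measure_ball_lt_top (μ := volume) (x := (0 : EuclideanSpace ℝ (Fin (m + 2))))
    (r := 1)
  rw [hball] at hpos hfin
  -- The factor `c` is nonzero and finite because the unit ball has positive finite volume.
  have hc0 : c ≠ 0 := by rintro rfl; simp at hpos
  have hct : c ≠ ⊤ := by
    rintro rfl
    have : sphMeasure m Set.univ ≠ 0 := by intro h; simp [h] at hpos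
    simp [ENNReal.mul_top this] at hfin
  have hL : Measurable L := L.continuous.measurable
  refine ⟨hL, ?_⟩
  ext A hA
  rw [Measure.map_apply hL hA]
  refine (ENNReal.mul_left_inj hc0 hct).1 ?_
  rw [← hc _ hA, ← hc _ (hL hA), ← L.measurePreserving.measure_preimage_emb
    L.toHomeomorph.measurableEmbedding {x | ‖x‖ < 1 ∧ ‖x‖⁻¹ • x ∈ A}]
  congr 1; ext x
  simp

lemma sphWeight_mem (m : ℕ) (θ : Fin (m + 1) → ℝ) (hθ : ∀ j, θ j ∈ Set.Icc 0 (side m j)) :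
    sphWeight (m + 2) θ ∈ Set.Icc (0 : ℝ) 1 := by
  have key : ∀ j : Fin (m + 1), Real.sin (θ j) ^ (m - (j : ℕ)) ∈ Set.Icc (0 : ℝ) 1 := by
    intro j
    by_cases hj : (j : ℕ) < m
    · have h := hθ j
      rw [side, if_pos hj] at h
      have h0 := Real.sin_nonneg_of_nonneg_of_le_pi h.1 h.2
      exact ⟨pow_nonneg h0 _, pow_le_one₀ h0 (Real.sin_le_one _)⟩
    · have : m - (j : ℕ) = 0 := by omega
      simp [this]
  exact ⟨Finset.prod_nonneg fun j _ => (key j).1,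
    Finset.prod_le_one (fun j _ => (key j).1) fun j _ => (key j).2⟩

lemma boxMeasure_eq (m : ℕ) : boxMeasure m =
    volume.restrict (Set.univ.pi fun j => Set.Ico 0 (side m j)) := by
  rw [boxMeasure, volume_pi, Measure.restrict_pi_pi]

/-- The map `g` is constrained only on the sphere; its measurability with respect to `sphMeasure`
comes from that measure being carried by the sphere. -/
lemma integral_sphParam {V : Type*} [NormedAddCommGroup V] [NormedSpace ℝ V] (m : ℕ)
    (g : EuclideanSpace ℝ (Fin (m + 2)) → V) (hg : ContinuousOn g (Metric.sphere 0 1)) :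
    ∫ θ, sphWeight (m + 2) θ • g (sphParam (m + 2) θ) ∂(boxMeasure m) =
      ∫ x, g x ∂(sphMeasure m) := by
  have hS : MeasurableSet (Metric.sphere (0 : EuclideanSpace ℝ (Fin (m + 2))) 1) :=
    Metric.isClosed_sphere.measurableSet
  have hν : (sphMeasure m).restrict (Metric.sphere 0 1) = sphMeasure m := by
    refine Measure.restrict_eq_self_of_ae_mem ?_
    refine (ae_map_iff (p := fun x => x ∈ Metric.sphere (0 : EuclideanSpace ℝ (Fin (m + 2))) 1)
      (measurable_sphParam' (m + 2)).aemeasurable hS).2 ?_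
    exact Filter.Eventually.of_forall fun θ => by simp [norm_sphParam]
  have hm : AEStronglyMeasurable g (sphMeasure m) := by
    rw [← hν]; exact hg.aestronglyMeasurable hS
  conv_rhs => rw [sphMeasure, integral_map (measurable_sphParam' _).aemeasurable hm]
  refine Eq.trans ?_ (integral_withDensity_eq_integral_toReal_smul (μ := boxMeasure m)
    (measurable_sphWeight (m + 2)).ennreal_ofReal (by simp)
    (fun θ => g (sphParam (m + 2) θ))).symm
  rw [boxMeasure_eq]
  refine setIntegral_congr_fun (MeasurableSet.univ_pi fun _ => measurableSet_Ico) fun θ hθ => ?_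
  have := (sphWeight_mem m θ fun j => Set.Ico_subset_Icc_self (hθ j trivial)).1
  simp only [ENNReal.toReal_ofReal this]

/-- Rotation invariance of the weighted angular integral. -/
lemma integral_rotation {V : Type*} [NormedAddCommGroup V] [NormedSpace ℝ V] (m : ℕ)
    (g : EuclideanSpace ℝ (Fin (m + 2)) → V) (hg : ContinuousOn g (Metric.sphere 0 1))
    (L : EuclideanSpace ℝ (Fin (m + 2)) ≃ₗᵢ[ℝ] EuclideanSpace ℝ (Fin (m + 2))) :
    ∫ θ, sphWeight (m + 2) θ • g (L (sphParam (m + 2) θ)) ∂(boxMeasure m) =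
      ∫ θ, sphWeight (m + 2) θ • g (sphParam (m + 2) θ) ∂(boxMeasure m) := by
  rw [integral_sphParam m g hg, integral_sphParam m (fun x => g (L x))]
  · exact (map_sphMeasure m L).integral_comp L.toHomeomorph.measurableEmbedding g
  · exact hg.comp L.continuous.continuousOn fun x hx => by simpa using hx

/-! ### Riemann sums over a uniform grid -/

/-- Error bound for a Riemann sum over a uniform grid with `n` cells per axis, in terms of a bound
`ε` for the oscillation of `h` on each cell. -/
lemma riemann_sum_error {V : Type*} [NormedAddCommGroup V] [NormedSpace ℝ V] [CompleteSpace V]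
    {k : ℕ} (ℓ : Fin k → ℝ) (hℓ : ∀ j, 0 < ℓ j) (n : ℕ) (hn : 1 ≤ n) (h : (Fin k → ℝ) → V)
    (hint : IntegrableOn h (Set.univ.pi fun j => Set.Ico 0 (ℓ j)))
    (P : (Fin k → Fin n) → Fin k → ℝ) (ε : ℝ)
    (hosc : ∀ a θ, (∀ j, θ j ∈ Set.Ico (ℓ j / n * (a j : ℕ)) (ℓ j / n * ((a j : ℕ) + 1))) →
      ‖h θ - h (P a)‖ ≤ ε) :
    ‖(1 / (n : ℝ) ^ k) • ∑ a, h (P a) -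
      (∏ j, ℓ j)⁻¹ • ∫ θ in Set.univ.pi fun j => Set.Ico 0 (ℓ j), h θ‖ ≤ ε := by
  have hn0 : (0 : ℝ) < n := by exact_mod_cast hn
  set cell : (Fin k → Fin n) → Set (Fin k → ℝ) := fun a =>
    Set.univ.pi fun j => Set.Ico (ℓ j / n * (a j : ℕ)) (ℓ j / n * ((a j : ℕ) + 1)) with hcell
  have hlt : ∀ j, 0 < ℓ j / n := fun j => div_pos (hℓ j) hn0
  have hfl : ∀ (a : Fin k → Fin n) θ, θ ∈ cell a → ∀ j, ⌊θ j / (ℓ j / n)⌋₊ = (a j : ℕ) := by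
    intro a θ hθ j
    have := hθ j trivial
    rw [Nat.floor_eq_iff (div_nonneg ((mul_nonneg (hlt j).le (Nat.cast_nonneg _)).trans this.1)
      (hlt j).le), le_div_iff₀ (hlt j), div_lt_iff₀ (hlt j), mul_comm, mul_comm _ (ℓ j / n)]
    exact this
  have hunion : (Set.univ.pi fun j => Set.Ico 0 (ℓ j)) = ⋃ a, cell a := by
    ext θ
    simp only [Set.mem_iUnion]
    constructor
    · intro hθ
      have hb : ∀ j, ⌊θ j / (ℓ j / n)⌋₊ < n := by
        intro j
        have := hθ j trivial
        rw [Nat.floor_lt (div_nonneg this.1 (hlt j).le), div_lt_iff₀ (hlt j),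
          mul_div_cancel₀ _ hn0.ne']
        exact this.2
      refine ⟨fun j => ⟨_, hb j⟩, fun j _ => ?_⟩
      have h0 : 0 ≤ θ j / (ℓ j / n) := div_nonneg (hθ j trivial).1 (hlt j).le
      have h1 := Nat.floor_le h0
      have h2 := Nat.lt_floor_add_one (θ j / (ℓ j / n))
      rw [le_div_iff₀ (hlt j)] at h1
      rw [div_lt_iff₀ (hlt j)] at h2
      constructor
      · simpa [mul_comm] using h1
      · simpa [mul_comm] using h2
    · rintro ⟨a, ha⟩ j -
      have := ha j trivial
      refine ⟨(mul_nonneg (hlt j).le (Nat.cast_nonneg _)).trans this.1, this.2.trans_le ?_⟩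
      have h1 : (((a j : ℕ) : ℝ) + 1) ≤ n := by exact_mod_cast (a j).2
      calc ℓ j / n * ((a j : ℕ) + 1) ≤ ℓ j / n * n := by
            exact mul_le_mul_of_nonneg_left h1 (hlt j).le
        _ = ℓ j := div_mul_cancel₀ _ hn0.ne'
  have hmeas : ∀ a, MeasurableSet (cell a) := fun a =>
    MeasurableSet.univ_pi fun _ => measurableSet_Ico
  have hdisj : Pairwise (Function.onFun Disjoint cell) := by
    intro a b hab
    refine Set.disjoint_left.2 fun θ ha hb => hab ?_
    ext j
    rw [← hfl a θ ha j, hfl b θ hb j]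
  have hvol : ∀ a, volume.real (cell a) = (∏ j, ℓ j) / (n : ℝ) ^ k := by
    intro a
    rw [measureReal_def, hcell, Real.volume_pi_Ico_toReal]
    · simp only [mul_add, mul_one, add_sub_cancel_left]
      rw [Finset.prod_div_distrib]
      simp
    · intro j
      exact mul_le_mul_of_nonneg_left (by linarith) (hlt j).le
  have hfin : ∀ a, volume (cell a) < ⊤ := by
    intro a
    rw [hcell, Real.volume_pi_Ico]
    exact ENNReal.prod_lt_top fun _ _ => ENNReal.ofReal_lt_top
  have hintc : ∀ a, IntegrableOn h (cell a) := fun a =>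
    hint.mono_set (hunion ▸ Set.subset_iUnion cell a)
  have hone : ∀ a, ‖((∏ j, ℓ j) / (n : ℝ) ^ k) • h (P a) - ∫ θ in cell a, h θ‖ ≤
      ε * ((∏ j, ℓ j) / (n : ℝ) ^ k) := by
    intro a
    rw [← hvol a, norm_sub_rev, ← setIntegral_const,
      ← integral_sub (hintc a) (integrableOn_const (hfin a).ne)]
    exact norm_setIntegral_le_of_norm_le_const (hfin a)
      fun θ hθ => hosc a θ fun j => hθ j trivial
  have hprod : 0 < ∏ j, ℓ j := Finset.prod_pos fun j _ => hℓ j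
  have hid : (1 / (n : ℝ) ^ k) • ∑ a, h (P a) -
      (∏ j, ℓ j)⁻¹ • ∫ θ in Set.univ.pi fun j => Set.Ico 0 (ℓ j), h θ =
      (∏ j, ℓ j)⁻¹ • ∑ a, (((∏ j, ℓ j) / (n : ℝ) ^ k) • h (P a) - ∫ θ in cell a, h θ) := by
    rw [hunion, integral_iUnion_fintype hmeas hdisj hintc, Finset.sum_sub_distrib,
      ← Finset.smul_sum, smul_sub, smul_smul]
    congr 2
    field_simp
  rw [hid, norm_smul, Real.norm_of_nonneg (by positivity)]
  calc (∏ j, ℓ j)⁻¹ * ‖∑ a, (((∏ j, ℓ j) / (n : ℝ) ^ k) • h (P a) - ∫ θ in cell a, h θ)‖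
      ≤ (∏ j, ℓ j)⁻¹ * ∑ _a : Fin k → Fin n, ε * ((∏ j, ℓ j) / (n : ℝ) ^ k) := by
        gcongr
        exact norm_sum_le_of_le _ fun a _ => hone a
    _ = ε := by
        simp only [Finset.sum_const, Finset.card_univ, Fintype.card_pi, Fintype.card_fin,
          Finset.prod_const, nsmul_eq_mul, Nat.cast_pow]
        field_simp

/-! ### Quadrature error -/

/-- Every point of a grid cell is within one azimuthal step, in the sup distance, of the grid point
of that cell: the midpoint in the polar angles and the left end in the azimuth. -/
lemma gridPt_sub_le (m n : ℕ) (hn : 1 ≤ n) (a : Fin (m + 1) → Fin n) (θ : Fin (m + 1) → ℝ)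
    (hθ : ∀ j, θ j ∈ Set.Ico (side m j / n * (a j : ℕ)) (side m j / n * ((a j : ℕ) + 1))) :
    θ ∈ Set.Icc (0 : Fin (m + 1) → ℝ) (side m) ∧
      gridPt (m + 2) n a ∈ Set.Icc (0 : Fin (m + 1) → ℝ) (side m) ∧
      dist θ (gridPt (m + 2) n a : Fin (m + 1) → ℝ) ≤ 2 * Real.pi / n := by
  have hn0 : (0 : ℝ) < n := by exact_mod_cast hn
  have hpi := Real.pi_pos
  have hs : ∀ j, 0 < side m j ∧ side m j ≤ 2 * Real.pi := by
    intro j; unfold side; split_ifs <;> constructor <;> linarith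
  have hcell : ∀ j, Set.Icc (side m j / n * (a j : ℕ)) (side m j / n * ((a j : ℕ) + 1)) ⊆
      Set.Icc 0 (side m j) := by
    intro j
    have hp : 0 < side m j / n := div_pos (hs j).1 hn0
    refine Set.Icc_subset_Icc (mul_nonneg hp.le (Nat.cast_nonneg _)) ?_
    have h1 : (((a j : ℕ) : ℝ) + 1) ≤ n := by exact_mod_cast (a j).2
    calc side m j / n * ((a j : ℕ) + 1) ≤ side m j / n * n :=
          mul_le_mul_of_nonneg_left h1 hp.le
      _ = side m j := div_mul_cancel₀ _ hn0.ne'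
  have hg : ∀ j : Fin (m + 1), gridPt (m + 2) n a j ∈
      Set.Icc (side m j / n * (a j : ℕ)) (side m j / n * ((a j : ℕ) + 1)) := by
    intro j
    have hp : 0 < side m j / n := div_pos (hs j).1 hn0
    have hgj : gridPt (m + 2) n a j = if (j : ℕ) < m then Real.pi / n * ((a j : ℕ) + 1 / 2)
      else 2 * Real.pi / n * ((a j : ℕ) : ℝ) := rfl
    rw [hgj]
    unfold side at hp ⊢
    split_ifs at hp ⊢
    · constructor <;> exact mul_le_mul_of_nonneg_left (by linarith) hp.le
    · constructor <;> exact mul_le_mul_of_nonneg_left (by linarith) hp.le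
  refine ⟨⟨fun j => (hcell j (Set.Ico_subset_Icc_self (hθ j))).1,
    fun j => (hcell j (Set.Ico_subset_Icc_self (hθ j))).2⟩,
    ⟨fun j => (hcell j (hg j)).1, fun j => (hcell j (hg j)).2⟩, ?_⟩
  refine (dist_pi_le_iff (by positivity)).2 fun j => ?_
  have h1 := Real.dist_le_of_mem_Icc (Set.Ico_subset_Icc_self (hθ j)) (hg j)
  calc _ ≤ _ := h1
    _ = side m j / n := by ring
    _ ≤ 2 * Real.pi / n := by gcongr; exact (hs j).2

lemma contDiff_sphWeight (m : ℕ) :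
    ContDiff ℝ 1 (fun θ : Fin (m + 1) → ℝ => sphWeight (m + 2) θ) := by
  unfold sphWeight
  refine contDiff_prod fun j _ => ContDiff.pow ?_ _
  exact Real.contDiff_sin.comp (contDiff_apply ℝ ℝ j)

lemma contDiff_sphParam (m : ℕ) :
    ContDiff ℝ 1 (fun θ : Fin (m + 1) → ℝ => sphParam (m + 2) θ) := by
  refine contDiff_euclidean.2 fun i => ?_
  have hs : ∀ j : Fin (m + 1), ContDiff ℝ 1 fun θ : Fin (m + 1) → ℝ => Real.sin (θ j) :=
    fun j => Real.contDiff_sin.comp (contDiff_apply ℝ ℝ j)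
  by_cases h : (i : ℕ) < m + 1
  · have e : (fun θ : Fin (m + 1) → ℝ => sphParam (m + 2) θ i) = fun θ =>
        (∏ j : Fin (m + 1), if (j : ℕ) < (i : ℕ) then Real.sin (θ j) else 1) *
        Real.cos (θ ⟨i, h⟩) := by
      ext θ; exact dif_pos h
    rw [e]
    refine ContDiff.mul (contDiff_prod fun j _ => ?_)
      (Real.contDiff_cos.comp (contDiff_apply ℝ ℝ (⟨i, h⟩ : Fin (m + 1))))
    split_ifs
    · exact hs j
    · exact contDiff_const
  · have e : (fun θ : Fin (m + 1) → ℝ => sphParam (m + 2) θ i) = fun θ =>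
        ∏ j : Fin (m + 1), Real.sin (θ j) := by
      ext θ; exact dif_neg h
    rw [e]
    exact contDiff_prod fun j _ => hs j

/-- `rotate d R` as a linear isometry, for orthogonal `R`. -/
lemma exists_rotate_eq (d : ℕ) (R : Matrix (Fin d) (Fin d) ℝ)
    (hR : R ∈ Matrix.orthogonalGroup (Fin d) ℝ) :
    ∃ L : EuclideanSpace ℝ (Fin d) ≃ₗᵢ[ℝ] EuclideanSpace ℝ (Fin d), ∀ x, rotate d R x = L x := by
  have h1 : ∀ x, rotate d R x = Matrix.toEuclideanLin R x := fun x => rfl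
  have hn : ∀ x, ‖Matrix.toEuclideanLin R x‖ = ‖x‖ := by
    intro x
    have : ‖Matrix.toEuclideanLin R x‖ ^ 2 = ‖x‖ ^ 2 := by
      rw [EuclideanSpace.real_norm_sq_eq, EuclideanSpace.real_norm_sq_eq]
      have a1 : ∑ i, (Matrix.toEuclideanLin R x).ofLp i ^ 2 =
          (R.mulVec x.ofLp) ⬝ᵥ (R.mulVec x.ofLp) := by
        simp [dotProduct, sq]
      rw [a1, Matrix.dotProduct_mulVec, Matrix.vecMul_mulVec]
      have hR' : R.transpose * R = 1 := (Matrix.mem_orthogonalGroup_iff' (Fin d) ℝ).1 hR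
      rw [hR', Matrix.vecMul_one]
      simp [dotProduct, sq]
    exact (sq_eq_sq₀ (norm_nonneg _) (norm_nonneg _)).1 this
  let L0 : EuclideanSpace ℝ (Fin d) →ₗᵢ[ℝ] EuclideanSpace ℝ (Fin d) :=
    ⟨Matrix.toEuclideanLin R, hn⟩
  exact ⟨L0.toLinearIsometryEquiv rfl, fun x => h1 x⟩

/-- The normalized weighted grid sum of `f ∘ L` lies within `C n^{-α}` of the normalized weighted
integral of `f`, with the same `C` for every isometry `L`: the integral is rotation invariant, and
the moduli of continuity of `f ∘ L` and `f` on the sphere agree. -/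
theorem sphere_quadrature {V : Type*} [NormedAddCommGroup V] [NormedSpace ℝ V] [CompleteSpace V]
    (m : ℕ) (α : ℝ) (hα : 0 < α) (hα1 : α ≤ 1) (f : EuclideanSpace ℝ (Fin (m + 2)) → V)
    (M H : ℝ) (hM : 0 ≤ M) (hH : 0 ≤ H)
    (hbd : ∀ x, ‖x‖ = 1 → ‖f x‖ ≤ M)
    (hhold : ∀ x y, ‖x‖ = 1 → ‖y‖ = 1 → ‖f x - f y‖ ≤ H * ‖x - y‖ ^ α) :
    ∃ C : ℝ, 0 ≤ C ∧ ∀ n : ℕ, 1 ≤ n →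
      ∀ L : EuclideanSpace ℝ (Fin (m + 2)) ≃ₗᵢ[ℝ] EuclideanSpace ℝ (Fin (m + 2)),
        ‖(1 / (n : ℝ) ^ (m + 1)) • (∑ a : Fin (m + 1) → Fin n,
            sphWeight (m + 2) (gridPt (m + 2) n a) •
              f (L (sphParam (m + 2) (gridPt (m + 2) n a)))) -
          (∏ j, side m j)⁻¹ • ∫ θ, sphWeight (m + 2) θ • f (sphParam (m + 2) θ) ∂(boxMeasure m)‖
          ≤ C * (n : ℝ) ^ (-α) := by
  have hpi := Real.pi_pos
  obtain ⟨K₁, hK₁⟩ := (contDiff_sphWeight m).contDiffOn.exists_lipschitzOnWith one_ne_zero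
    (convex_Icc (0 : Fin (m + 1) → ℝ) (side m)) isCompact_Icc
  obtain ⟨K₂, hK₂⟩ := (contDiff_sphParam m).contDiffOn.exists_lipschitzOnWith one_ne_zero
    (convex_Icc (0 : Fin (m + 1) → ℝ) (side m)) isCompact_Icc
  have hf : ContinuousOn f (Metric.sphere 0 1) := by
    intro x hx
    have hx1 : ‖x‖ = 1 := by simpa using hx
    rw [ContinuousWithinAt, tendsto_iff_norm_sub_tendsto_zero]
    have ht : Filter.Tendsto (fun y => H * ‖y - x‖ ^ α)
        (nhdsWithin x (Metric.sphere 0 1)) (nhds 0) := by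
      have hc : Continuous fun y : EuclideanSpace ℝ (Fin (m + 2)) => H * ‖y - x‖ ^ α :=
        continuous_const.mul ((continuous_id.sub continuous_const).norm.rpow_const
          fun _ => Or.inr hα.le)
      have := (hc.tendsto x).mono_left (nhdsWithin_le_nhds (s := Metric.sphere 0 1))
      simpa [Real.zero_rpow hα.ne'] using this
    refine squeeze_zero' (Filter.Eventually.of_forall fun _ => norm_nonneg _) ?_ ht
    filter_upwards [self_mem_nhdsWithin] with y hy
    exact hhold y x (by simpa using hy) hx1
  refine ⟨M * (K₁ * (2 * Real.pi)) + H * (K₂ * (2 * Real.pi)) ^ α, by positivity,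
    fun n hn L => ?_⟩
  have hn0 : (0 : ℝ) < n := by exact_mod_cast hn
  rw [← integral_rotation m f hf L, boxMeasure_eq]
  have hside : ∀ j, 0 < side m j := by intro j; unfold side; split_ifs <;> linarith
  have hLs : ∀ θ : Fin (m + 1) → ℝ, ‖L (sphParam (m + 2) θ)‖ = 1 := fun θ => by
    rw [L.norm_map, norm_sphParam]
  have hcont : Continuous fun θ : Fin (m + 1) → ℝ =>
      sphWeight (m + 2) θ • f (L (sphParam (m + 2) θ)) := by
    refine (contDiff_sphWeight m).continuous.smul ?_
    exact hf.comp_continuous (L.continuous.comp (contDiff_sphParam m).continuous)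
      fun θ => by simpa using hLs θ
  have hint : IntegrableOn (fun θ : Fin (m + 1) → ℝ =>
      sphWeight (m + 2) θ • f (L (sphParam (m + 2) θ)))
      (Set.univ.pi fun j => Set.Ico 0 (side m j)) := by
    refine (hcont.continuousOn.integrableOn_compact
      (isCompact_Icc (a := (0 : Fin (m + 1) → ℝ)) (b := side m))).mono_set ?_
    exact fun θ hθ => ⟨fun j => (hθ j trivial).1, fun j => (hθ j trivial).2.le⟩
  refine riemann_sum_error (side m) hside n hn
    (fun θ : Fin (m + 1) → ℝ => sphWeight (m + 2) θ • f (L (sphParam (m + 2) θ))) hint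
    (fun a => gridPt (m + 2) n a) _ fun a θ hθ => ?_
  obtain ⟨h1, h2, h3⟩ := gridPt_sub_le m n hn a θ hθ
  set θ' : Fin (m + 1) → ℝ := gridPt (m + 2) n a with hθ'
  have hw : |sphWeight (m + 2) θ - sphWeight (m + 2) θ'| ≤ K₁ * (2 * Real.pi / n) := by
    have := hK₁.dist_le_mul θ h1 θ' h2
    rw [Real.dist_eq] at this
    exact this.trans (by gcongr)
  have hp : ‖L (sphParam (m + 2) θ) - L (sphParam (m + 2) θ')‖ ≤ K₂ * (2 * Real.pi / n) := by
    have := hK₂.dist_le_mul θ h1 θ' h2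
    rw [dist_eq_norm] at this
    rw [← map_sub, L.norm_map]
    exact this.trans (by gcongr)
  have hw1 := sphWeight_mem m θ' fun j => ⟨h2.1 j, h2.2 j⟩
  have hn1 : ((n : ℝ))⁻¹ ≤ (n : ℝ) ^ (-α) := by
    rw [← Real.rpow_neg_one]
    exact Real.rpow_le_rpow_of_exponent_le (by exact_mod_cast hn) (by linarith)
  have hsplit : sphWeight (m + 2) θ • f (L (sphParam (m + 2) θ)) -
      sphWeight (m + 2) θ' • f (L (sphParam (m + 2) θ')) =
      (sphWeight (m + 2) θ - sphWeight (m + 2) θ') • f (L (sphParam (m + 2) θ)) +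
      sphWeight (m + 2) θ' • (f (L (sphParam (m + 2) θ)) - f (L (sphParam (m + 2) θ'))) := by
    module
  change ‖sphWeight (m + 2) θ • f (L (sphParam (m + 2) θ)) -
      sphWeight (m + 2) θ' • f (L (sphParam (m + 2) θ'))‖ ≤ _
  rw [hsplit]
  have b1 : ‖(sphWeight (m + 2) θ - sphWeight (m + 2) θ') • f (L (sphParam (m + 2) θ))‖ ≤
      K₁ * (2 * Real.pi / n) * M := by
    rw [norm_smul, Real.norm_eq_abs]
    exact mul_le_mul hw (hbd _ (hLs θ)) (norm_nonneg _) (by positivity)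
  have b2 : ‖sphWeight (m + 2) θ' • (f (L (sphParam (m + 2) θ)) - f (L (sphParam (m + 2) θ')))‖ ≤
      H * (K₂ * (2 * Real.pi / n)) ^ α := by
    rw [norm_smul, Real.norm_of_nonneg hw1.1]
    calc _ ≤ 1 * (H * ‖L (sphParam (m + 2) θ) - L (sphParam (m + 2) θ')‖ ^ α) :=
          mul_le_mul hw1.2 (hhold _ _ (hLs θ) (hLs θ')) (norm_nonneg _) zero_le_one
      _ ≤ _ := by
          rw [one_mul]
          gcongr
  refine (norm_add_le _ _).trans ((add_le_add b1 b2).trans ?_)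
  have e1 : K₁ * (2 * Real.pi / n) * M = M * (K₁ * (2 * Real.pi)) * (n : ℝ)⁻¹ := by ring
  have e2 : (K₂ * (2 * Real.pi / n)) ^ α = (K₂ * (2 * Real.pi)) ^ α * (n : ℝ) ^ (-α) := by
    rw [Real.rpow_neg hn0.le, ← Real.inv_rpow hn0.le, ← Real.mul_rpow (by positivity)
      (by positivity)]
    congr 1; ring
  rw [e1, e2, add_mul, mul_assoc H]
  gcongr

lemma abs_sphWeight_le_one (d : ℕ) (θ : Fin (d - 1) → ℝ) : |sphWeight d θ| ≤ 1 := by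
  rw [sphWeight, Finset.abs_prod]
  refine Finset.prod_le_one (fun _ _ => abs_nonneg _) fun j _ => ?_
  rw [abs_pow]
  exact pow_le_one₀ (abs_nonneg _) (Real.abs_sin_le_one _)

/-- for an `α`-Hölder continuous `f : S^{d-1} → ℂ^p` there is a constant
`C > 0`, depending only on `f` and `d`, such that for every angular resolution `n_a ≥ 1`
and every rotation `R ∈ SO(d)`, the two weighted Riemann sums of `f` over the uniform
angular grid (one for `f`, one for the rotated `f`) differ by at most
`C d^{α/2} n_a^{-α}` after normalization by `n_a^{d-1}`. -/
theorem stmt_13 (d p : ℕ) (α : ℝ) (hα : α ∈ Set.Icc (0 : ℝ) 1)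
    (f : EuclideanSpace ℝ (Fin d) → EuclideanSpace ℂ (Fin p))
    (Mf Cf : ℝ)
    (hbd : ∀ x : EuclideanSpace ℝ (Fin d), ‖x‖ = 1 → ‖f x‖ ≤ Mf)
    (hhold : ∀ x y : EuclideanSpace ℝ (Fin d), ‖x‖ = 1 → ‖y‖ = 1 →
      ‖f x - f y‖ ≤ Cf * ‖x - y‖ ^ α) :
    ∃ C : ℝ, 0 < C ∧ ∀ n : ℕ, 1 ≤ n →
      ∀ R : Matrix (Fin d) (Fin d) ℝ,
        R ∈ Matrix.orthogonalGroup (Fin d) ℝ → R.det = 1 →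
        (1 / (n : ℝ) ^ (d - 1)) *
            ‖(∑ a : Fin (d - 1) → Fin n,
                sphWeight d (gridPt d n a) • f (sphParam d (gridPt d n a))) -
              ∑ a : Fin (d - 1) → Fin n,
                sphWeight d (gridPt d n a) • f (rotate d R (sphParam d (gridPt d n a)))‖ ≤
          C * (d : ℝ) ^ (α / 2) * (n : ℝ) ^ (-α) := by
  -- In dimensions `0` and `1` the only element of `SO(d)` is the identity.
  rcases Nat.lt_or_ge d 2 with hd | hd
  · refine ⟨1, one_pos, fun n hn R hR hdet => ?_⟩
    have hR1 : R = 1 := by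
      interval_cases d
      · exact Subsingleton.elim _ _
      · ext i j
        fin_cases i; fin_cases j
        simpa using hdet
    have hrot : ∀ x, rotate d R x = x := fun x => by
      rw [hR1, rotate, Matrix.one_mulVec]; rfl
    simp only [hrot, sub_self, norm_zero, mul_zero]
    positivity
  obtain ⟨m, rfl⟩ : ∃ m, d = m + 2 := ⟨d - 2, by omega⟩
  have hd1 : (1 : ℝ) ≤ ((m + 2 : ℕ) : ℝ) ^ (α / 2) :=
    Real.one_le_rpow (by norm_cast; omega) (by linarith [hα.1])
  have hM : 0 ≤ Mf := (norm_nonneg _).trans (hbd _ (norm_sphParam m 0))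
  rcases hα.1.eq_or_lt with h0 | h0
  -- For `α = 0` the map `f` need not be measurable, but the trivial bound suffices.
  · refine ⟨2 * Mf + 1, by linarith, fun n hn R hR hdet => ?_⟩
    obtain ⟨L, hL⟩ := exists_rotate_eq _ R hR
    have hn0 : (0 : ℝ) < n := by exact_mod_cast hn
    have hb : ∀ g : EuclideanSpace ℝ (Fin (m + 2)) → EuclideanSpace ℂ (Fin p),
        (∀ x, ‖x‖ = 1 → ‖g x‖ ≤ Mf) → ‖∑ a : Fin (m + 2 - 1) → Fin n,
          sphWeight (m + 2) (gridPt (m + 2) n a) • g (sphParam (m + 2) (gridPt (m + 2) n a))‖ ≤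
          (n : ℝ) ^ (m + 1) * Mf := by
      intro g hg
      refine (norm_sum_le_of_le (f := fun a : Fin (m + 2 - 1) → Fin n =>
        sphWeight (m + 2) (gridPt (m + 2) n a) • g (sphParam (m + 2) (gridPt (m + 2) n a)))
        _ (n := fun _ => Mf) fun a _ => ?_).trans (le_of_eq ?_)
      · rw [norm_smul, Real.norm_eq_abs]
        calc _ ≤ 1 * Mf := mul_le_mul (abs_sphWeight_le_one _ _) (hg _ (norm_sphParam m _))
              (norm_nonneg _) zero_le_one
          _ = Mf := one_mul _
      · simp
    have t1 := hb f hbd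
    have t2 := hb (fun x => f (rotate (m + 2) R x))
      fun x hx => hbd _ (by rw [hL, L.norm_map, hx])
    have t3 := (norm_sub_le _ _).trans (add_le_add t1 t2)
    rw [← h0]
    simp only [zero_div, Real.rpow_zero, neg_zero, mul_one]
    rw [one_div, inv_mul_le_iff₀ (by positivity)]
    change _ ≤ (n : ℝ) ^ (m + 1) * _
    have : 0 < (n : ℝ) ^ (m + 1) := by positivity
    exact t3.trans (by nlinarith)
  obtain ⟨C, hC, hmain⟩ := sphere_quadrature m α h0 hα.2 f Mf |Cf| hM (abs_nonneg _) hbd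
    fun x y hx hy => (hhold x y hx hy).trans
      (mul_le_mul_of_nonneg_right (le_abs_self _) (by positivity))
  refine ⟨2 * C + 1, by linarith, fun n hn R hR hdet => ?_⟩
  obtain ⟨L, hL⟩ := exists_rotate_eq _ R hR
  have hn0 : (0 : ℝ) < n := by exact_mod_cast hn
  have q1 := hmain n hn (LinearIsometryEquiv.refl ℝ _)
  have q2 := hmain n hn L
  simp only [LinearIsometryEquiv.coe_refl, id_eq] at q1
  simp only [hL]
  rw [← Real.norm_of_nonneg (show (0 : ℝ) ≤ 1 / (n : ℝ) ^ (m + 2 - 1) by positivity),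
    ← norm_smul, smul_sub]
  have q3 := (norm_sub_le _ _).trans (add_le_add q1 q2)
  rw [sub_sub_sub_cancel_right] at q3
  refine q3.trans ?_
  have hp : 0 ≤ (n : ℝ) ^ (-α) := by positivity
  calc C * (n : ℝ) ^ (-α) + C * (n : ℝ) ^ (-α) = (2 * C) * 1 * (n : ℝ) ^ (-α) := by ring
    _ ≤ (2 * C + 1) * ((m + 2 : ℕ) : ℝ) ^ (α / 2) * (n : ℝ) ^ (-α) := by
        gcongr
        linarith
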